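/- Let k > 7/2. There exists a constant C depending only on k such that for all Schwartz functions f, g on ℝ³: ‖Q(g,f)‖_{L²_k} ≤ C ‖g‖_{L²_k} ‖f‖_{H²_{k−1}}. -/

import Mathlib

/-!
The operator is put in non-divergence form. Since the kernel `a` acts by convolution and all
derivatives can be moved onto Schwartz functions, the first-order terms cancel and
`Q(g,f) = ∑ (a_ij * g) ∂_i ∂_j f - (∑ a_ij * ∂_i ∂_j g) f` (`landauQ_eq`).

In the last term, `∑ ∂_i ∂_j a_ij = -8π δ₀` (`convA_identity`), so it equals `8π g f`. To prove
this identity, `a` is replaced by the smooth kernel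
`δ_ij (e² + |z|²)^(-1/2) - z_i z_j (e² + |z|²)^(-3/2)`, whose double divergence is exactly
`-15 e⁴ (e² + |z|²)^(-7/2)`, an approximate identity; two integrations by parts and the limit
`e → 0` conclude. The value `8π` of the mass plays no role, only its positivity does.

Cauchy–Schwarz gives `|a * h| (v) ≤ 2 (∫ |z|⁻² ⟨v - z⟩^(-2l) dz)^(1/2) ‖h‖_{L²_l}`
(`convA_abs_le`). The integral is bounded in `v` when `l > 3/2`, and is `O(⟨v⟩⁻²)` when `l > 5/2`,
by Peetre's inequality. This is used twice:

* with `h = g` and `l = k`, it yields `⟨v⟩ |a * g| ≤ C ‖g‖_{L²_k}` (`convA_decay`), and this factor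
  `⟨v⟩` is what allows the weight `k - 1` on the second derivatives of `f`;
* with `h = ∂_i ∂_j f` and `l = k - 1`, together with `8π f = -∑ a_ij * ∂_i ∂_j f`, it yields
  `sup |f| ≤ C ‖f‖_{H²_{k-1}}` (`sup_bound`), which controls the term `8π g f` and replaces the
  Sobolev embedding.
-/

open MeasureTheory Real Finset

noncomputable section

abbrev E3 := EuclideanSpace ℝ (Fin 3)

/-- The Japanese bracket `⟨v⟩ = √(1+|v|²)`. -/
def jap (v : E3) : ℝ := Real.sqrt (1 + ‖v‖ ^ 2)

/-- The projection matrix `Π(z)` with entries `δ_ij − z_i z_j / |z|²`. -/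
def Pi3 (z : E3) : Matrix (Fin 3) (Fin 3) ℝ :=
  Matrix.of fun i j => (if i = j then (1 : ℝ) else 0) - z i * z j / ‖z‖ ^ 2

/-- The Coulomb Landau kernel `a(z) = |z|⁻¹ Π(z)`. -/
def aK (z : E3) : Matrix (Fin 3) (Fin 3) ℝ :=
  Matrix.of fun i j => ‖z‖⁻¹ * Pi3 z i j

/-- Partial derivative `∂_i f`. -/
def pd (i : Fin 3) (f : E3 → ℝ) : E3 → ℝ :=
  fun v => fderiv ℝ f v (EuclideanSpace.single i 1)

/-- The Landau collision operator with Coulomb potential: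
`Q(g,h)(v) = ∇_v · ∫ a(v−v*) ( g(v*) ∇h(v) − ∇g(v*) h(v) ) dv*`. -/
def landauQ (g h : E3 → ℝ) : E3 → ℝ := fun v =>
  ∑ i : Fin 3, fderiv ℝ (fun w =>
      ∫ vs : E3, ∑ j : Fin 3, aK (w - vs) i j * (g vs * pd j h w - pd j g vs * h w)) v
    (EuclideanSpace.single i 1)

/-- The pairing `⟨f,g⟩ = ∫ f g dv`. -/
def pairL (f g : E3 → ℝ) : ℝ := ∫ v : E3, f v * g v

/-- Weighted Lebesgue norm `‖f‖_{L^p_l} = (∫ |f|^p ⟨v⟩^{lp})^{1/p}`. -/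
def Lpl (p l : ℝ) (f : E3 → ℝ) : ℝ :=
  (∫ v : E3, |f v| ^ p * jap v ^ (l * p)) ^ (1 / p)

/-- Iterated partial derivative in direction `i`. -/
def pdPow (i : Fin 3) : ℕ → (E3 → ℝ) → E3 → ℝ
  | 0, f => f
  | n + 1, f => pd i (pdPow i n f)

/-- Multi-index partial derivative `∂^m f`. -/
def pdM (m : Fin 3 → ℕ) (f : E3 → ℝ) : E3 → ℝ :=
  pdPow 0 (m 0) (pdPow 1 (m 1) (pdPow 2 (m 2) f))

/-- Multi-indices `m` with `|m| ≤ n`. -/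
def multiIdx (n : ℕ) : Finset (Fin 3 → ℕ) :=
  (Fintype.piFinset fun _ : Fin 3 => Finset.range (n + 1)).filter fun m => (∑ i, m i) ≤ n

/-- Square of the weighted Sobolev norm `‖f‖²_{H^n_l} = Σ_{|m|≤n} ‖∂^m f‖²_{L²_l}`. -/
def HSobSq (n : ℕ) (l : ℝ) (f : E3 → ℝ) : ℝ :=
  ∑ m ∈ multiIdx n, (Lpl 2 l (pdM m f)) ^ 2

/-- Weighted Sobolev norm `‖f‖_{H^n_l}`. -/
def HSob (n : ℕ) (l : ℝ) (f : E3 → ℝ) : ℝ :=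
  Real.sqrt (HSobSq n l f)

/-- Rotational derivative `(v_i ∂_j − v_j ∂_i) f`. -/
def rotD (i j : Fin 3) (f : E3 → ℝ) : E3 → ℝ :=
  fun v => v i * pd j f v - v j * pd i f v

/-- Square of the anisotropic norm
`‖f‖²_{𝖧¹_A} = Σ_{i<j} ‖(v_i ∂_j − v_j ∂_i) f‖²_{L²_{−3/2}} + ‖f‖²_{H¹_{−3/2}}`. -/
def HAsq (f : E3 → ℝ) : ℝ :=
  (∑ p ∈ Finset.univ.filter (fun p : Fin 3 × Fin 3 => p.1 < p.2),
    (Lpl 2 (-(3/2)) (rotD p.1 p.2 f)) ^ 2) + HSobSq 1 (-(3/2)) f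

/-- The anisotropic norm `‖f‖_{𝖧¹_A}`. -/
def HA (f : E3 → ℝ) : ℝ := Real.sqrt (HAsq f)

end

/-! ### The Japanese bracket and integrals of the singular kernel -/
open scoped SchwartzMap LineDeriv

lemma jap_pos (v : E3) : 0 < jap v := Real.sqrt_pos.2 (by positivity)

lemma jap_sq (v : E3) : jap v ^ 2 = 1 + ‖v‖ ^ 2 := Real.sq_sqrt (by positivity)

lemma one_le_jap (v : E3) : 1 ≤ jap v := by
  rw [jap, Real.one_le_sqrt]; nlinarith [sq_nonneg ‖v‖]

lemma jap_le (v : E3) : jap v ≤ 1 + ‖v‖ := by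
  refine Real.sqrt_le_iff.2 ⟨by positivity, ?_⟩
  nlinarith [norm_nonneg v]

lemma jap_rpow (v : E3) (r : ℝ) : jap v ^ r = (1 + ‖v‖ ^ 2) ^ (r / 2) := by
  rw [jap, Real.sqrt_eq_rpow, ← Real.rpow_mul (by positivity)]
  ring_nf

lemma jap_rpow_temperate (r : ℝ) : (fun v : E3 => jap v ^ r).HasTemperateGrowth := by
  simp_rw [jap_rpow]
  fun_prop

@[fun_prop]
lemma continuous_jap : Continuous jap := by
  unfold jap; fun_prop

lemma continuous_jap_rpow (r : ℝ) : Continuous fun v : E3 => jap v ^ r :=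
  continuous_jap.rpow_const fun v => Or.inl (jap_pos v).ne'

lemma integrable_jap {p : ℝ} (hp : 3 < p) : Integrable fun v : E3 => jap v ^ (-p) := by
  simp_rw [jap_rpow]
  exact integrable_rpow_neg_one_add_norm_sq (by simpa using hp)

/-- In dimension three `|z|⁻²` is integrable near the origin. -/
lemma integrable_ball_inv_sq :
    Integrable ((Metric.ball (0 : E3) 1).indicator fun z => (‖z‖ ^ 2)⁻¹) := by
  rw [integrable_indicator_iff measurableSet_ball]
  have h := integrableOn_fun_norm_addHaar (E := E3) volume (f := fun y : ℝ => (y ^ 2)⁻¹) (r := 1)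
  refine h.2 ?_
  have : IntegrableOn (fun _ : ℝ => (1 : ℝ)) (Set.Ioo 0 1) := by simp
  refine this.congr_fun (fun y hy => ?_) measurableSet_Ioo
  have : y ≠ 0 := hy.1.ne'
  simp [this]

lemma inv_sq_le_indicator (z : E3) :
    (‖z‖ ^ 2)⁻¹ ≤ (Metric.ball (0 : E3) 1).indicator (fun z => (‖z‖ ^ 2)⁻¹) z + 1 := by
  by_cases hz : z ∈ Metric.ball (0 : E3) 1
  · simp [Set.indicator_of_mem hz]
  · have h1 : 1 ≤ ‖z‖ := by simpa using hz
    rw [Set.indicator_of_notMem hz, zero_add]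
    exact inv_le_one_of_one_le₀ (one_le_pow₀ h1)

lemma ker_le {p : ℝ} (hp : 0 ≤ p) (v z : E3) :
    (‖z‖ ^ 2)⁻¹ * jap (v - z) ^ (-p) ≤
      (Metric.ball (0 : E3) 1).indicator (fun z => (‖z‖ ^ 2)⁻¹) z + jap (v - z) ^ (-p) := by
  have h1 : jap (v - z) ^ (-p) ≤ 1 :=
    Real.rpow_le_one_of_one_le_of_nonpos (one_le_jap _) (by linarith)
  have h0 : 0 ≤ jap (v - z) ^ (-p) := (Real.rpow_pos_of_pos (jap_pos _) _).le
  have h2 : 0 ≤ (Metric.ball (0 : E3) 1).indicator (fun z => (‖z‖ ^ 2)⁻¹) z :=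
    Set.indicator_nonneg (fun _ _ => by positivity) _
  calc _ ≤ ((Metric.ball (0 : E3) 1).indicator (fun z => (‖z‖ ^ 2)⁻¹) z + 1) *
        jap (v - z) ^ (-p) := by gcongr; exact inv_sq_le_indicator z
    _ ≤ _ := by nlinarith

lemma integrable_jap_sub {p : ℝ} (hp : 3 < p) (v : E3) :
    Integrable fun z : E3 => jap (v - z) ^ (-p) :=
  (integrable_jap hp).comp_sub_left v

lemma integrable_ker {p : ℝ} (hp : 3 < p) (v : E3) :
    Integrable fun z : E3 => (‖z‖ ^ 2)⁻¹ * jap (v - z) ^ (-p) := by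
  refine (integrable_ball_inv_sq.add (integrable_jap_sub hp v)).mono' ?_ (.of_forall fun z => ?_)
  · have := continuous_jap_rpow (-p)
    exact (Measurable.mul (by fun_prop)
      (this.measurable.comp (by fun_prop))).aestronglyMeasurable
  · rw [Real.norm_of_nonneg (by have := jap_pos (v - z); positivity)]
    exact ker_le (by linarith) v z

lemma integrable_ker_one {p : ℝ} (hp : 3 < p) (v : E3) :
    Integrable fun z : E3 => ‖z‖⁻¹ * jap (v - z) ^ (-p) := by
  refine ((integrable_ker hp v).add (integrable_jap_sub hp v)).mono' ?_ (.of_forall fun z => ?_)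
  · have := continuous_jap_rpow (-p)
    exact (Measurable.mul (by fun_prop)
      (this.measurable.comp (by fun_prop))).aestronglyMeasurable
  · have h0 : 0 < jap (v - z) ^ (-p) := Real.rpow_pos_of_pos (jap_pos _) _
    rw [Real.norm_of_nonneg (by positivity)]
    have : ‖z‖⁻¹ ≤ (‖z‖ ^ 2)⁻¹ + 1 := by
      rw [← inv_pow]; nlinarith [sq_nonneg (‖z‖⁻¹ - 1)]
    simp only [Pi.add_apply]
    nlinarith

lemma ker_bound {p : ℝ} (hp : 3 < p) :
    ∃ C, 0 ≤ C ∧ ∀ v : E3, ∫ z : E3, (‖z‖ ^ 2)⁻¹ * jap (v - z) ^ (-p) ≤ C := by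
  refine ⟨(∫ z, (Metric.ball (0 : E3) 1).indicator (fun z => (‖z‖ ^ 2)⁻¹) z) +
    ∫ z : E3, jap z ^ (-p), ?_, fun v => ?_⟩
  · refine add_nonneg (integral_nonneg fun z => Set.indicator_nonneg (fun _ _ => by positivity) _)
      (integral_nonneg fun z => ?_)
    have := jap_pos z
    positivity
  · rw [← integral_sub_left_eq_self (fun z : E3 => jap z ^ (-p)) volume v,
      ← integral_add integrable_ball_inv_sq (integrable_jap_sub hp v)]
    exact integral_mono (integrable_ker hp v)
      (integrable_ball_inv_sq.add (integrable_jap_sub hp v)) fun z => ker_le (by linarith) v z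

/-- The decaying form of the kernel estimate: Peetre's inequality `⟨v⟩² ≤ 2⟨v-z⟩² + 2|z|²`
trades two powers of the weight for a factor `⟨v⟩⁻²`. -/
lemma ker_bound_decay {p : ℝ} (hp : 5 < p) :
    ∃ C, 0 ≤ C ∧ ∀ v : E3, jap v ^ 2 * ∫ z : E3, (‖z‖ ^ 2)⁻¹ * jap (v - z) ^ (-p) ≤ C := by
  obtain ⟨C, hC0, hC⟩ := ker_bound (p := p - 2) (by linarith)
  have hI : 0 ≤ ∫ z : E3, jap z ^ (-p) := integral_nonneg fun z => by
    have := jap_pos z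
    positivity
  refine ⟨2 * C + 2 * ∫ z : E3, jap z ^ (-p), by positivity, fun v => ?_⟩
  have hp3 : 3 < p := by linarith
  have i1 := (integrable_ker (p := p - 2) (by linarith) v).const_mul 2
  have i2 := (integrable_jap_sub hp3 v).const_mul 2
  calc jap v ^ 2 * ∫ z : E3, (‖z‖ ^ 2)⁻¹ * jap (v - z) ^ (-p)
      = ∫ z : E3, jap v ^ 2 * ((‖z‖ ^ 2)⁻¹ * jap (v - z) ^ (-p)) := by
        rw [integral_const_mul]
    _ ≤ ∫ z : E3, (2 * ((‖z‖ ^ 2)⁻¹ * jap (v - z) ^ (-(p - 2))) + 2 * jap (v - z) ^ (-p)) := by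
        refine integral_mono ((integrable_ker hp3 v).const_mul _) (i1.add i2) fun z => ?_
        have hj := jap_pos (v - z)
        have e : jap (v - z) ^ (-(p - 2)) = jap (v - z) ^ 2 * jap (v - z) ^ (-p) := by
          rw [← Real.rpow_natCast, ← Real.rpow_add hj]; congr 1; push_cast; ring
        have hpos : 0 < jap (v - z) ^ (-p) := Real.rpow_pos_of_pos hj _
        have hP : jap v ^ 2 ≤ 2 * jap (v - z) ^ 2 + 2 * ‖z‖ ^ 2 := by
          rw [jap_sq, jap_sq]
          have h1 : ‖v‖ ≤ ‖v - z‖ + ‖z‖ := by simpa using norm_add_le (v - z) z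
          nlinarith [sq_nonneg (‖v - z‖ - ‖z‖), norm_nonneg v]
        have hz : (‖z‖ ^ 2)⁻¹ * ‖z‖ ^ 2 ≤ 1 := inv_mul_le_one
        have hz0 : 0 ≤ (‖z‖ ^ 2)⁻¹ := by positivity
        simp only
        rw [e]
        calc _ ≤ (2 * jap (v - z) ^ 2 + 2 * ‖z‖ ^ 2) * ((‖z‖ ^ 2)⁻¹ * jap (v - z) ^ (-p)) := by
              gcongr
          _ = 2 * ((‖z‖ ^ 2)⁻¹ * (jap (v - z) ^ 2 * jap (v - z) ^ (-p))) +
              2 * (((‖z‖ ^ 2)⁻¹ * ‖z‖ ^ 2) * jap (v - z) ^ (-p)) := by ring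
          _ ≤ _ := by nlinarith
    _ ≤ _ := by
        rw [integral_add i1 i2, integral_const_mul, integral_const_mul,
          integral_sub_left_eq_self (fun z : E3 => jap z ^ (-p)) volume v]
        linarith [hC v]

/-! ### Convolution with the Landau kernel and the non-divergence form -/

/-- The partial derivative `∂_i` as an operation on Schwartz functions. -/
noncomputable def sD (i : Fin 3) (h : 𝓢(E3, ℝ)) : 𝓢(E3, ℝ) :=
  ∂_{(EuclideanSpace.single i 1 : E3)} h

lemma sD_eq (i : Fin 3) (h : 𝓢(E3, ℝ)) : ⇑(sD i h) = pd i h := by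
  ext v; exact SchwartzMap.lineDerivOp_apply_eq_fderiv _ _ _

lemma sD_apply (i : Fin 3) (h : 𝓢(E3, ℝ)) (v : E3) :
    sD i h v = fderiv ℝ h v (EuclideanSpace.single i 1) :=
  SchwartzMap.lineDerivOp_apply_eq_fderiv _ _ _

lemma sD_comm (i j : Fin 3) (h : 𝓢(E3, ℝ)) : sD i (sD j h) = sD j (sD i h) := by
  ext v
  have key : ∀ a b : Fin 3, sD a (sD b h) v =
      fderiv ℝ (fderiv ℝ h) v (EuclideanSpace.single a 1) (EuclideanSpace.single b 1) := by
    intro a b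
    rw [sD_apply]
    have e : ⇑(sD b h) = fun w => fderiv ℝ h w (EuclideanSpace.single b 1) := by
      ext w; exact sD_apply _ _ _
    have hd : DifferentiableAt ℝ (fderiv ℝ h) v :=
      ((h.smooth 2).fderiv_right (m := 1) (by norm_num)).differentiable (by norm_num) v
    rw [e, fderiv_clm_apply hd (differentiableAt_const _)]
    simp
  rw [key, key]
  exact ((h.smooth 2).contDiffAt.isSymmSndFDerivAt (by simp)).eq _ _

lemma abs_coord_le (z : E3) (i : Fin 3) : |z i| ≤ ‖z‖ := by
  simpa using PiLp.norm_apply_le z i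

lemma abs_aK_le (z : E3) (i j : Fin 3) : |aK z i j| ≤ 2 * ‖z‖⁻¹ := by
  simp only [aK, Pi3, Matrix.of_apply, abs_mul, abs_inv, abs_norm]
  rw [mul_comm]
  gcongr
  refine (abs_sub _ _).trans ?_
  have h1 : |if i = j then (1 : ℝ) else 0| ≤ 1 := by split_ifs <;> simp
  have h2 : |z i * z j / ‖z‖ ^ 2| ≤ 1 := by
    rw [abs_div, abs_mul, abs_pow, abs_norm]
    refine div_le_one_of_le₀ ?_ (by positivity)
    rw [sq]
    exact mul_le_mul (abs_coord_le z i) (abs_coord_le z j) (abs_nonneg _) (norm_nonneg _)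
  linarith

lemma aK_symm (z : E3) (i j : Fin 3) : aK z i j = aK z j i := by
  simp only [aK, Pi3, Matrix.of_apply, eq_comm (a := i), mul_comm (z i)]

lemma measurable_coord (i : Fin 3) : Measurable fun z : E3 => z i :=
  (by fun_prop : Continuous fun z : E3 => z i).measurable

lemma measurable_aK (i j : Fin 3) : Measurable fun z : E3 => aK z i j := by
  simp only [aK, Pi3, Matrix.of_apply]
  have h1 := measurable_coord i
  have h2 := measurable_coord j
  fun_prop

/-- A Schwartz function decays at least like `⟨u⟩⁻⁴`. -/
lemma schwartz_decay {F : Type*} [NormedAddCommGroup F] [NormedSpace ℝ F] (h : 𝓢(E3, F)) :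
    ∃ C, 0 ≤ C ∧ ∀ u, ‖h u‖ ≤ C * jap u ^ (-4 : ℝ) := by
  have key := fun u => SchwartzMap.one_add_le_sup_seminorm_apply (𝕜 := ℝ) (m := (4, 0)) (k := 4)
    (n := 0) le_rfl le_rfl h u
  set C := 2 ^ ((4, 0) : ℕ × ℕ).1 * ((Finset.Iic ((4, 0) : ℕ × ℕ)).sup
    (fun m => SchwartzMap.seminorm ℝ m.1 m.2)) h
  refine ⟨C, le_trans (by positivity) (key 0), fun u => ?_⟩
  have h1 := key u
  rw [norm_iteratedFDeriv_zero] at h1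
  have hj := jap_pos u
  have h4 : jap u ^ (-4 : ℝ) = (jap u ^ 4)⁻¹ := by
    rw [Real.rpow_neg hj.le]; norm_cast
  rw [h4, ← div_eq_mul_inv, le_div_iff₀ (by positivity), mul_comm]
  refine le_trans ?_ h1
  gcongr
  exact jap_le u

/-- The convolution `a_ij * h`, the singular factor carrying the integration variable. -/
noncomputable def convA (i j : Fin 3) (h : E3 → ℝ) (v : E3) : ℝ := ∫ z : E3, aK z i j * h (v - z)

lemma integrable_conv (i j : Fin 3) (h : 𝓢(E3, ℝ)) (v : E3) :
    Integrable fun z : E3 => aK z i j * h (v - z) := by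
  obtain ⟨C, hC0, hC⟩ := schwartz_decay h
  refine ((integrable_ker_one (p := 4) (by norm_num) v).const_mul (2 * C)).mono' ?_
    (.of_forall fun z => ?_)
  · have := h.continuous
    exact ((measurable_aK i j).mul (by fun_prop)).aestronglyMeasurable
  · rw [norm_mul, Real.norm_eq_abs]
    calc _ ≤ (2 * ‖z‖⁻¹) * (C * jap (v - z) ^ (-4 : ℝ)) := by
          gcongr
          · exact abs_aK_le z i j
          · exact hC _
      _ = _ := by ring

lemma jap_near {v w z : E3} (hw : w ∈ Metric.ball v 1) :
    jap (w - z) ^ (-4 : ℝ) ≤ 16 * jap (v - z) ^ (-4 : ℝ) := by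
  have h1 := jap_pos (w - z)
  have h2 := jap_pos (v - z)
  have hd : ‖v - w‖ < 1 := by rw [← dist_eq_norm, dist_comm]; exact hw
  have ht : ‖v - z‖ ≤ ‖w - z‖ + ‖v - w‖ := by
    have := norm_add_le (w - z) (v - w)
    rwa [show w - z + (v - w) = v - z by abel] at this
  have h3 : jap (v - z) ≤ 2 * jap (w - z) := by
    refine abs_le_of_sq_le_sq' ?_ (by positivity) |>.2
    rw [mul_pow, jap_sq, jap_sq]
    nlinarith [norm_nonneg (v - z), norm_nonneg (w - z), norm_nonneg (v - w),
      sq_nonneg (‖w - z‖ - 1)]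
  have e : ∀ u : E3, jap u ^ (-4 : ℝ) = (jap u ^ 4)⁻¹ := fun u => by
    rw [Real.rpow_neg (jap_pos u).le]; norm_cast
  rw [e, e, ← div_eq_mul_inv, le_div_iff₀ (by positivity), inv_mul_le_iff₀ (by positivity)]
  calc jap (v - z) ^ 4 ≤ (2 * jap (w - z)) ^ 4 := by gcongr
    _ = _ := by ring

/-- Differentiation falls on the Schwartz factor of the convolution. -/
lemma hasFDerivAt_convA (i j : Fin 3) (h : 𝓢(E3, ℝ)) (v : E3) :
    HasFDerivAt (convA i j h) (∫ z : E3, aK z i j • fderiv ℝ h (v - z)) v ∧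
    Integrable (fun z : E3 => aK z i j • fderiv ℝ h (v - z)) := by
  obtain ⟨C, hC0, hC⟩ := schwartz_decay (SchwartzMap.fderivCLM ℝ E3 ℝ h)
  simp only [SchwartzMap.fderivCLM_apply] at hC
  have hb : ∀ z : E3, ∀ w ∈ Metric.ball v 1, ‖aK z i j • fderiv ℝ h (w - z)‖ ≤
      32 * C * (‖z‖⁻¹ * jap (v - z) ^ (-4 : ℝ)) := by
    intro z w hw
    rw [norm_smul, Real.norm_eq_abs]
    calc _ ≤ (2 * ‖z‖⁻¹) * (C * (16 * jap (v - z) ^ (-4 : ℝ))) := by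
          gcongr
          · exact abs_aK_le z i j
          · exact (hC _).trans (by gcongr; exact jap_near hw)
      _ = _ := by ring
  have hbi : Integrable fun z : E3 => 32 * C * (‖z‖⁻¹ * jap (v - z) ^ (-4 : ℝ)) :=
    (integrable_ker_one (p := 4) (by norm_num) v).const_mul _
  have hc : Continuous (fderiv ℝ h) := (h.smooth 1).continuous_fderiv (by norm_num)
  have hm : AEStronglyMeasurable (fun z : E3 => aK z i j • fderiv ℝ h (v - z)) volume :=
    (measurable_aK i j).aestronglyMeasurable.smul
      (hc.comp (continuous_const.sub continuous_id)).aestronglyMeasurable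
  refine ⟨?_, hbi.mono' hm (.of_forall fun z => hb z v (Metric.mem_ball_self one_pos))⟩
  refine hasFDerivAt_integral_of_dominated_of_fderiv_le (Metric.ball_mem_nhds v one_pos)
    (F := fun w z => aK z i j * h (w - z)) (F' := fun w z => aK z i j • fderiv ℝ h (w - z))
    (.of_forall fun w => (integrable_conv i j h w).aestronglyMeasurable) (integrable_conv i j h v)
    hm (.of_forall hb) hbi (.of_forall fun z w _ => ?_)
  have h1 : HasFDerivAt (fun w : E3 => h (w - z)) (fderiv ℝ h (w - z)) w := by
    have := (h.hasFDerivAt (w - z)).comp w ((hasFDerivAt_id w).sub_const z)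
    rw [ContinuousLinearMap.comp_id] at this
    exact this
  exact h1.const_mul _

lemma differentiableAt_convA (i j : Fin 3) (h : 𝓢(E3, ℝ)) (v : E3) :
    DifferentiableAt ℝ (convA i j h) v := (hasFDerivAt_convA i j h v).1.differentiableAt

lemma fderiv_convA (i j l : Fin 3) (h : 𝓢(E3, ℝ)) (v : E3) :
    fderiv ℝ (convA i j h) v (EuclideanSpace.single l 1) = convA i j (sD l h) v := by
  obtain ⟨h1, h2⟩ := hasFDerivAt_convA i j h v
  rw [h1.fderiv, ContinuousLinearMap.integral_apply h2]
  simp only [convA, sD_apply, smul_apply, smul_eq_mul]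

lemma convA_symm (i j : Fin 3) (h : E3 → ℝ) (v : E3) : convA i j h v = convA j i h v := by
  simp only [convA, aK_symm _ i j]

/-- The flux in the definition of `landauQ`, in terms of convolutions. -/
lemma flux_eq (f g : 𝓢(E3, ℝ)) (i : Fin 3) (w : E3) :
    (∫ vs : E3, ∑ j : Fin 3, aK (w - vs) i j * (g vs * pd j f w - pd j g vs * f w)) =
      ∑ j : Fin 3, (convA i j g w * sD j f w - convA i j (sD j g) w * f w) := by
  rw [← integral_sub_left_eq_self _ volume w]
  simp only [sub_sub_cancel, ← sD_eq, mul_sub, ← mul_assoc]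
  have i1 := fun j => (integrable_conv i j g w).mul_const (sD j f w)
  have i2 := fun j => (integrable_conv i j (sD j g) w).mul_const (f w)
  have i3 := fun j => (i1 j).sub (i2 j)
  simp only [Pi.sub_def] at i3
  rw [integral_finsetSum _ fun j _ => i3 j]
  refine Finset.sum_congr rfl fun j _ => ?_
  rw [integral_sub (i1 j) (i2 j), integral_mul_const, integral_mul_const]
  rfl

/-- The first-order terms cancel because `a` is symmetric, leaving the non-divergence form of the
collision operator. -/
lemma landauQ_eq (f g : 𝓢(E3, ℝ)) (v : E3) :
    landauQ g f v = (∑ i, ∑ j, convA i j g v * sD i (sD j f) v) -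
      (∑ i, ∑ j, convA i j (sD i (sD j g)) v) * f v := by
  have hi : ∀ i : Fin 3, fderiv ℝ (fun w =>
      ∫ vs : E3, ∑ j : Fin 3, aK (w - vs) i j * (g vs * pd j f w - pd j g vs * f w)) v
      (EuclideanSpace.single i 1) = ∑ j : Fin 3, ((convA i j g v * sD i (sD j f) v +
        sD j f v * convA i j (sD i g) v) - (convA i j (sD j g) v * sD i f v +
        f v * convA i j (sD i (sD j g)) v)) := by
    intro i
    have hA := fun j => differentiableAt_convA i j g v
    have hB := fun j => differentiableAt_convA i j (sD j g) v
    have hf := f.differentiableAt (x := v)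
    have hDf := fun j => (sD j f).differentiableAt (x := v)
    simp_rw [flux_eq f g]
    rw [fderiv_fun_sum fun j _ => ((hA j).fun_mul (hDf j)).fun_sub ((hB j).fun_mul hf),
      _root_.sum_apply]
    refine Finset.sum_congr rfl fun j _ => ?_
    rw [fderiv_fun_sub ((hA j).fun_mul (hDf j)) ((hB j).fun_mul hf), fderiv_fun_mul (hA j) (hDf j),
      fderiv_fun_mul (hB j) hf]
    simp only [sub_apply, add_apply,
      smul_apply, smul_eq_mul, fderiv_convA, sD_apply i]
  simp only [landauQ]
  rw [Finset.sum_congr rfl fun i _ => hi i]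
  simp only [Finset.sum_sub_distrib, Finset.sum_add_distrib]
  have hcancel : ∑ i, ∑ j, sD j f v * convA i j (sD i g) v =
      ∑ i, ∑ j, convA i j (sD j g) v * sD i f v := by
    rw [Finset.sum_comm]
    refine Finset.sum_congr rfl fun i _ => Finset.sum_congr rfl fun j _ => ?_
    rw [convA_symm j i]; ring
  rw [hcancel, Finset.sum_mul]
  simp only [Finset.sum_mul, mul_comm (f v)]
  ring

/-! ### The regularised kernel -/

lemma integrable_temp_mul {F : E3 → ℝ} (hF : F.HasTemperateGrowth) (h : 𝓢(E3, ℝ)) :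
    Integrable fun z => F z * h z := by
  have := (SchwartzMap.smulLeftCLM ℝ F h).integrable (μ := volume)
  simpa only [SchwartzMap.smulLeftCLM_apply hF, smul_eq_mul] using this

lemma temp_reflect {F : E3 → ℝ} (hF : F.HasTemperateGrowth) (v : E3) :
    (fun z => F (v - z)).HasTemperateGrowth :=
  hF.comp ((Function.HasTemperateGrowth.const v).sub Function.HasTemperateGrowth.id')

lemma integrable_temp_conv {F : E3 → ℝ} (hF : F.HasTemperateGrowth) (h : 𝓢(E3, ℝ)) (v : E3) :
    Integrable fun z => F z * h (v - z) := by
  simpa using (integrable_temp_mul (temp_reflect hF v) h).comp_sub_left v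

/-- Integration by parts in a convolution with a tempered smooth kernel. -/
lemma ibp_conv {F F' : E3 → ℝ} (i : Fin 3) (hF : F.HasTemperateGrowth)
    (hF' : F'.HasTemperateGrowth)
    (hd : ∀ z, HasLineDerivAt ℝ F (F' z) z (EuclideanSpace.single i 1))
    (h : 𝓢(E3, ℝ)) (v : E3) :
    ∫ z, F z * sD i h (v - z) = ∫ z, F' z * h (v - z) := by
  have hdiff : Differentiable ℝ F := hF.1.differentiable (by simp)
  have hfd : ∀ z, fderiv ℝ (fun z => F (v - z)) z (EuclideanSpace.single i 1) = -F' (v - z) := by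
    intro z
    have h1 : HasFDerivAt (fun z => F (v - z)) (-fderiv ℝ F (v - z)) z := by
      have := (hdiff (v - z)).hasFDerivAt.comp z ((hasFDerivAt_id z).const_sub v)
      simpa [Function.comp_def] using this
    rw [h1.fderiv, neg_apply, (hdiff (v - z)).hasFDerivAt.hasLineDerivAt _ |>.unique (hd (v - z))]
  have hT := temp_reflect hF v
  have hT' := temp_reflect hF' v
  have key := integral_mul_fderiv_eq_neg_fderiv_mul_of_integrable (μ := volume)
    (f := fun z => F (v - z)) (g := h) (v := EuclideanSpace.single i 1)
    (by simp only [hfd, neg_mul]; exact (integrable_temp_mul hT' h).neg)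
    (by simpa only [sD_apply] using integrable_temp_mul hT (sD i h))
    (integrable_temp_mul hT h)
    (fun z _ => hT.1.differentiable (by simp) z) (fun z _ => h.differentiableAt)
  simp only [hfd, neg_mul, integral_neg, neg_neg, ← sD_apply] at key
  rw [← integral_sub_left_eq_self _ volume v, ← integral_sub_left_eq_self (fun z => F' z * _) volume v]
  simpa using key

/-- The regularised power `(e² + |z|²)^r`. -/
noncomputable def reg (e r : ℝ) (z : E3) : ℝ := (e ^ 2 + ‖z‖ ^ 2) ^ r

lemma reg_temperate {e : ℝ} (he : 0 < e) (r : ℝ) : (reg e r).HasTemperateGrowth := by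
  have h1 : reg e r = fun z => (e ^ 2) ^ r * (1 + ‖e⁻¹ • z‖ ^ 2) ^ r := by
    ext z
    rw [reg, ← Real.mul_rpow (by positivity) (by positivity), norm_smul, mul_pow]
    congr 1
    simp only [norm_inv, Real.norm_eq_abs, inv_pow, sq_abs]
    field_simp
  rw [h1]
  exact (Function.HasTemperateGrowth.const _).mul
    ((Function.hasTemperateGrowth_one_add_norm_sq_rpow E3 r).comp
      (e⁻¹ • ContinuousLinearMap.id ℝ E3).hasTemperateGrowth)

lemma coord_temperate (i : Fin 3) : (fun z : E3 => z i).HasTemperateGrowth :=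
  (EuclideanSpace.proj (𝕜 := ℝ) i : E3 →L[ℝ] ℝ).hasTemperateGrowth

lemma hasDeriv_coord (z : E3) (i j : Fin 3) :
    HasDerivAt (fun t : ℝ => (z + t • (EuclideanSpace.single i 1 : E3)) j)
      (if i = j then 1 else 0) 0 := by
  have : (fun t : ℝ => (z + t • (EuclideanSpace.single i 1 : E3)) j) =
      fun t : ℝ => z j + t * (if i = j then 1 else 0) := by
    ext t; simp [eq_comm]
  rw [this]
  simpa using ((hasDerivAt_id (0 : ℝ)).mul_const (if i = j then (1 : ℝ) else 0)).const_add (z j)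

lemma hasDeriv_reg {e : ℝ} (he : 0 < e) (r : ℝ) (z : E3) (i : Fin 3) :
    HasDerivAt (fun t : ℝ => reg e r (z + t • (EuclideanSpace.single i 1 : E3)))
      (2 * r * z i * reg e (r - 1) z) 0 := by
  have h1 : HasDerivAt (fun t : ℝ => e ^ 2 + ‖z + t • (EuclideanSpace.single i 1 : E3)‖ ^ 2)
      (2 * z i) 0 := by
    have h0 : HasDerivAt (fun t : ℝ => z + t • (EuclideanSpace.single i 1 : E3))
        (EuclideanSpace.single i 1 : E3) 0 := by
      simpa using ((hasDerivAt_id (0 : ℝ)).smul_const (EuclideanSpace.single i 1 : E3)).const_add z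
    have := h0.norm_sq.const_add (e ^ 2)
    simpa [EuclideanSpace.inner_single_right] using this
  have h2 := h1.rpow_const (p := r) (Or.inl (by positivity))
  convert! h2 using 1
  simp only [reg, zero_smul, add_zero]
  ring

/-- The Kronecker delta. -/
def dlt (i j : Fin 3) : ℝ := if i = j then 1 else 0

/-- The regularised kernel `δ_ij (e²+|z|²)^{-1/2} - z_i z_j (e²+|z|²)^{-3/2}`. -/
noncomputable def bK (e : ℝ) (i j : Fin 3) (z : E3) : ℝ :=
  dlt i j * reg e (-1/2) z - z i * z j * reg e (-3/2) z

/-- `∂_i` of the entry `bK e i j`. -/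
noncomputable def bK1 (e : ℝ) (i j : Fin 3) (z : E3) : ℝ :=
  3 * (z i * z i * z j * reg e (-5/2) z) - (2 * dlt i j * z i + z j) * reg e (-3/2) z

/-- `∂_j ∂_i` of the entry `bK e i j`. -/
noncomputable def bK2 (e : ℝ) (i j : Fin 3) (z : E3) : ℝ :=
  -(2 * dlt i j + 1) * reg e (-3/2) z + 3 * ((2 * dlt i j * z i + z j) * z j) * reg e (-5/2) z
    + 3 * (2 * dlt i j * (z i * z j) + z i * z i) * reg e (-5/2) z
    - 15 * (z i * z i * z j * z j) * reg e (-7/2) z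

lemma bK_temperate {e : ℝ} (he : 0 < e) (i j : Fin 3) : (bK e i j).HasTemperateGrowth :=
  ((Function.HasTemperateGrowth.const _).mul (reg_temperate he _)).sub
    (((coord_temperate i).mul (coord_temperate j)).mul (reg_temperate he _))

lemma bK1_temperate {e : ℝ} (he : 0 < e) (i j : Fin 3) : (bK1 e i j).HasTemperateGrowth :=
  ((Function.HasTemperateGrowth.const _).mul ((((coord_temperate i).mul (coord_temperate i)).mul
    (coord_temperate j)).mul (reg_temperate he _))).sub
    ((((Function.HasTemperateGrowth.const _).mul (coord_temperate i)).add (coord_temperate j)).mul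
      (reg_temperate he _))

lemma bK2_temperate {e : ℝ} (he : 0 < e) (i j : Fin 3) : (bK2 e i j).HasTemperateGrowth := by
  have hi := coord_temperate i
  have hj := coord_temperate j
  have c := fun r : ℝ => Function.HasTemperateGrowth.const (E := E3) r
  have h := reg_temperate he
  exact ((((c _).mul (h _)).add (((c _).mul ((((c _).mul hi).add hj).mul hj)).mul (h _))).add
    (((c _).mul (((c _).mul (hi.mul hj)).add (hi.mul hi))).mul (h _))).sub
    (((c _).mul (((hi.mul hi).mul hj).mul hj)).mul (h _))

lemma bK_deriv {e : ℝ} (he : 0 < e) (i j : Fin 3) (z : E3) :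
    HasLineDerivAt ℝ (bK e i j) (bK1 e i j z) z (EuclideanSpace.single i 1) := by
  have hi := hasDeriv_coord z i i
  have hj := hasDeriv_coord z i j
  have h := fun r => hasDeriv_reg he r z i
  have := ((h (-1/2)).const_mul (dlt i j)).sub ((hi.mul hj).mul (h (-3/2)))
  unfold HasLineDerivAt
  convert! this using 1
  have e1 : (-1/2 - 1 : ℝ) = -3/2 := by norm_num
  have e2 : (-3/2 - 1 : ℝ) = -5/2 := by norm_num
  by_cases hij : i = j
  · subst hij
    simp [bK1, dlt, e1, e2]; ring
  · simp [bK1, dlt, e1, e2, hij]; ring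

lemma bK1_deriv {e : ℝ} (he : 0 < e) (i j : Fin 3) (z : E3) :
    HasLineDerivAt ℝ (bK1 e i j) (bK2 e i j z) z (EuclideanSpace.single j 1) := by
  have hi := hasDeriv_coord z j i
  have hj := hasDeriv_coord z j j
  have h := fun r => hasDeriv_reg he r z j
  have := ((((hi.mul hi).mul hj).mul (h (-5/2))).const_mul 3).sub
    (((hi.const_mul (2 * dlt i j)).add hj).mul (h (-3/2)))
  unfold HasLineDerivAt
  convert! this using 1
  have e1 : (-5/2 - 1 : ℝ) = -7/2 := by norm_num
  have e2 : (-3/2 - 1 : ℝ) = -5/2 := by norm_num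
  by_cases hij : i = j
  · subst hij
    simp [bK2, dlt, e1, e2]; ring
  · have hji : ¬ j = i := fun h => hij h.symm
    simp [bK2, dlt, e1, e2, hij, hji]; ring

/-- The double divergence of the regularised kernel is an approximate identity. -/
lemma bK2_sum {e : ℝ} (he : 0 < e) (z : E3) :
    ∑ i, ∑ j, bK2 e i j z = -15 * (e ^ 4 * reg e (-7/2) z) := by
  have hpos : 0 < e ^ 2 + ‖z‖ ^ 2 := by positivity
  have e5 : reg e (-5/2) z = (e ^ 2 + ‖z‖ ^ 2) * reg e (-7/2) z := by
    rw [reg, reg, mul_comm, ← Real.rpow_add_one hpos.ne']; norm_num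
  have e3 : reg e (-3/2) z = (e ^ 2 + ‖z‖ ^ 2) ^ 2 * reg e (-7/2) z := by
    rw [reg, reg, mul_comm, ← Real.rpow_add_natCast hpos.ne']; norm_num
  have hn : ‖z‖ ^ 2 = z 0 ^ 2 + z 1 ^ 2 + z 2 ^ 2 := by
    simp [EuclideanSpace.norm_sq_eq, Fin.sum_univ_three]
  simp only [bK2, e5, e3, hn, Fin.sum_univ_three, dlt]
  simp
  ring

lemma regularised_identity {e : ℝ} (he : 0 < e) (h : 𝓢(E3, ℝ)) (v : E3) :
    ∑ i, ∑ j, ∫ z, bK e i j z * sD i (sD j h) (v - z) =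
      -15 * ∫ y : E3, jap y ^ (-7 : ℝ) * h (v - e • y) := by
  have h1 : ∀ i j, ∫ z, bK e i j z * sD i (sD j h) (v - z) = ∫ z, bK2 e i j z * h (v - z) :=
    fun i j => (ibp_conv i (bK_temperate he i j) (bK1_temperate he i j) (bK_deriv he i j) _ v).trans
      (ibp_conv j (bK1_temperate he i j) (bK2_temperate he i j) (bK1_deriv he i j) _ v)
  simp only [h1]
  have hI := fun i j => integrable_temp_conv (bK2_temperate he i j) h v
  have h2 : ∀ i, ∑ j, ∫ z, bK2 e i j z * h (v - z) = ∫ z, ∑ j, bK2 e i j z * h (v - z) :=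
    fun i => (integral_finsetSum _ fun j _ => hI i j).symm
  simp only [h2]
  rw [← integral_finsetSum _ fun i _ => integrable_finsetSum _ fun j _ => hI i j]
  simp only [← Finset.sum_mul, bK2_sum he]
  have h3 := Measure.integral_comp_smul (volume : Measure E3)
    (fun z => e ^ 4 * reg e (-7/2) z * h (v - z)) e
  simp only [finrank_euclideanSpace, Fintype.card_fin, smul_eq_mul] at h3
  rw [abs_of_pos (by positivity), eq_inv_mul_iff_mul_eq₀ (by positivity)] at h3
  simp only [mul_assoc (-15 : ℝ), integral_const_mul]
  rw [← h3, ← integral_const_mul]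
  congr 2
  ext y
  have h4 : reg e (-7/2) (e • y) = (e ^ 7)⁻¹ * jap y ^ (-7 : ℝ) := by
    have h7 : (e ^ 2) ^ (-7/2 : ℝ) = (e ^ 7)⁻¹ := by
      rw [← Real.rpow_natCast e 2, ← Real.rpow_mul he.le, ← Real.rpow_natCast, ← Real.rpow_neg he.le]
      norm_num
    rw [reg, norm_smul, jap_rpow, ← h7, ← Real.mul_rpow (by positivity) (by positivity)]
    congr 1
    rw [Real.norm_of_nonneg he.le]; ring
  rw [h4]
  field_simp

/-! ### The double divergence of the kernel and the Cauchy–Schwarz bound -/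

lemma reg_le {e r : ℝ} (hr : r ≤ 0) {z : E3} (hz : z ≠ 0) : reg e r z ≤ ‖z‖ ^ (2 * r) := by
  have hz' : 0 < ‖z‖ := norm_pos_iff.2 hz
  rw [Real.rpow_mul hz'.le, reg, Real.rpow_two]
  exact Real.rpow_le_rpow_of_nonpos (by positivity) (by nlinarith [sq_nonneg e]) hr

lemma reg_nonneg (e r : ℝ) (z : E3) : 0 ≤ reg e r z := Real.rpow_nonneg (by positivity) _

lemma rpow_norm_neg {z : E3} :
    ‖z‖ ^ (2 * (-1/2) : ℝ) = ‖z‖⁻¹ ∧ ‖z‖ ^ (2 * (-3/2) : ℝ) = (‖z‖ ^ 3)⁻¹ := by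
  constructor
  · rw [show (2 * (-1/2) : ℝ) = -1 by norm_num, Real.rpow_neg_one]
  · rw [show (2 * (-3/2) : ℝ) = -((3 : ℕ) : ℝ) by norm_num, Real.rpow_neg (norm_nonneg z),
      Real.rpow_natCast]

lemma abs_bK_le (e : ℝ) (i j : Fin 3) {z : E3} (hz : z ≠ 0) : |bK e i j z| ≤ 2 * ‖z‖⁻¹ := by
  have hz' : 0 < ‖z‖ := norm_pos_iff.2 hz
  have h1 := reg_le (e := e) (r := -1/2) (by norm_num) hz
  have h3 := reg_le (e := e) (r := -3/2) (by norm_num) hz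
  rw [rpow_norm_neg.1] at h1
  rw [rpow_norm_neg.2] at h3
  have hd : |dlt i j| ≤ 1 := by unfold dlt; split_ifs <;> simp
  refine (abs_sub _ _).trans ?_
  have t1 : |dlt i j * reg e (-1/2) z| ≤ 1 * ‖z‖⁻¹ := by
    rw [abs_mul, abs_of_nonneg (reg_nonneg e _ z)]
    exact mul_le_mul hd h1 (reg_nonneg _ _ _) zero_le_one
  have t2 : |z i * z j * reg e (-3/2) z| ≤ ‖z‖⁻¹ := by
    rw [abs_mul, abs_mul, abs_of_nonneg (reg_nonneg e _ z)]
    calc _ ≤ ‖z‖ * ‖z‖ * (‖z‖ ^ 3)⁻¹ := by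
          have := reg_nonneg e (-3/2) z
          gcongr <;> exact abs_coord_le _ _
      _ = _ := by field_simp
  linarith

lemma bK_tendsto (i j : Fin 3) {z : E3} (hz : z ≠ 0) :
    Filter.Tendsto (fun e : ℝ => bK e i j z) (nhdsWithin 0 (Set.Ioi 0)) (nhds (aK z i j)) := by
  have hz' : 0 < ‖z‖ := norm_pos_iff.2 hz
  have hr : ∀ r : ℝ, Filter.Tendsto (fun e : ℝ => reg e r z) (nhdsWithin 0 (Set.Ioi 0))
      (nhds (‖z‖ ^ (2 * r))) := by
    intro r
    have hc : ContinuousAt (fun e : ℝ => reg e r z) 0 := by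
      unfold reg
      exact ContinuousAt.rpow_const (by fun_prop) (Or.inl (by positivity))
    have h0 : reg 0 r z = ‖z‖ ^ (2 * r) := by
      rw [Real.rpow_mul hz'.le, reg, Real.rpow_two]; norm_num
    have := hc.tendsto
    simp only [h0] at this
    exact this.mono_left nhdsWithin_le_nhds
  have h1 := hr (-1/2)
  have h3 := hr (-3/2)
  rw [rpow_norm_neg.1] at h1
  rw [rpow_norm_neg.2] at h3
  have e : aK z i j = dlt i j * ‖z‖⁻¹ - z i * z j * (‖z‖ ^ 3)⁻¹ := by
    simp only [aK, Pi3, Matrix.of_apply, dlt]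
    field_simp
  rw [e]
  exact (h1.const_mul _).sub (h3.const_mul _)

lemma ae_ne_zero : ∀ᵐ z : E3, z ≠ 0 := by
  simp [ae_iff]

lemma integrable_inv_norm_mul (h : 𝓢(E3, ℝ)) (v : E3) :
    Integrable fun z : E3 => 2 * ‖z‖⁻¹ * |h (v - z)| := by
  obtain ⟨C, hC0, hC⟩ := schwartz_decay h
  refine ((integrable_ker_one (p := 4) (by norm_num) v).const_mul (2 * C)).mono' ?_
    (.of_forall fun z => ?_)
  · have := h.continuous
    exact (Measurable.mul (by fun_prop) (by fun_prop)).aestronglyMeasurable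
  · rw [Real.norm_of_nonneg (by positivity)]
    calc _ ≤ (2 * ‖z‖⁻¹) * (C * jap (v - z) ^ (-4 : ℝ)) := by
          gcongr; exact hC _
      _ = _ := by ring

/-- The mass of the approximate identity; its exact value `8π` is irrelevant here. -/
noncomputable def massK : ℝ := 15 * ∫ y : E3, jap y ^ (-7 : ℝ)

lemma massK_pos : 0 < massK := by
  have h : 0 < ∫ y : E3, jap y ^ (-7 : ℝ) := by
    have hi : Integrable fun y : E3 => jap y ^ (-7 : ℝ) := integrable_jap (by norm_num)
    refine (integral_pos_iff_support_of_nonneg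
      (fun y => (Real.rpow_pos_of_pos (jap_pos y) _).le) hi).2 ?_
    have : Function.support (fun y : E3 => jap y ^ (-7 : ℝ)) = Set.univ := by
      ext y; simp [(jap_pos y).ne']
    rw [this]
    exact Measure.measure_univ_pos.2 (NeZero.ne _)
  unfold massK; positivity

/-- The distributional identity `∂_i ∂_j a_ij = -8π δ₀`, tested against Schwartz functions. -/
lemma convA_identity (h : 𝓢(E3, ℝ)) (v : E3) :
    ∑ i, ∑ j, convA i j (sD i (sD j h)) v = -massK * h v := by
  have hL : Filter.Tendsto
      (fun e : ℝ => ∑ i, ∑ j, ∫ z, bK e i j z * sD i (sD j h) (v - z))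
      (nhdsWithin 0 (Set.Ioi 0)) (nhds (∑ i, ∑ j, convA i j (sD i (sD j h)) v)) := by
    refine tendsto_finsetSum _ fun i _ => tendsto_finsetSum _ fun j _ => ?_
    refine tendsto_integral_filter_of_dominated_convergence
      (fun z => 2 * ‖z‖⁻¹ * |sD i (sD j h) (v - z)|) ?_ ?_ (integrable_inv_norm_mul _ v) ?_
    · filter_upwards [self_mem_nhdsWithin] with e he
      exact (integrable_temp_conv (bK_temperate he i j) _ v).aestronglyMeasurable
    · refine .of_forall fun e => ?_
      filter_upwards [ae_ne_zero] with z hz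
      rw [norm_mul, Real.norm_eq_abs, Real.norm_eq_abs]
      gcongr
      exact abs_bK_le e i j hz
    · filter_upwards [ae_ne_zero] with z hz
      exact (bK_tendsto i j hz).mul_const _
  have hR : Filter.Tendsto (fun e : ℝ => -15 * ∫ y : E3, jap y ^ (-7 : ℝ) * h (v - e • y))
      (nhdsWithin 0 (Set.Ioi 0)) (nhds (-15 * ∫ y : E3, jap y ^ (-7 : ℝ) * h v)) := by
    obtain ⟨C, hC0, hC⟩ := schwartz_decay h
    refine Filter.Tendsto.const_mul _ ?_
    refine tendsto_integral_filter_of_dominated_convergence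
      (fun y => jap y ^ (-7 : ℝ) * C) ?_ ?_ ((integrable_jap (by norm_num)).mul_const C) ?_
    · refine .of_forall fun e => ?_
      have h1 := h.continuous
      have h2 := continuous_jap_rpow (-7)
      exact (h2.mul (by fun_prop)).aestronglyMeasurable
    · refine .of_forall fun e => .of_forall fun y => ?_
      have hp := Real.rpow_pos_of_pos (jap_pos y) (-7)
      rw [norm_mul, Real.norm_of_nonneg hp.le]
      gcongr
      refine (hC _).trans (mul_le_of_le_one_right hC0 ?_)
      exact Real.rpow_le_one_of_one_le_of_nonpos (one_le_jap _) (by norm_num)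
    · refine .of_forall fun y => ?_
      have h1 : Continuous fun e : ℝ => h (v - e • y) := h.continuous.comp (by fun_prop)
      have h2 := (h1.tendsto 0).mono_left (nhdsWithin_le_nhds (s := Set.Ioi 0))
      simp only [zero_smul, sub_zero] at h2
      exact h2.const_mul _
  have hEq : ∀ᶠ e : ℝ in nhdsWithin 0 (Set.Ioi 0),
      ∑ i, ∑ j, ∫ z, bK e i j z * sD i (sD j h) (v - z) =
        -15 * ∫ y : E3, jap y ^ (-7 : ℝ) * h (v - e • y) := by
    filter_upwards [self_mem_nhdsWithin] with e he
    exact regularised_identity he h v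
  rw [tendsto_nhds_unique hL (hR.congr' (hEq.mono fun _ => Eq.symm)), integral_mul_const, massK]
  ring

lemma integrable_weighted (l : ℝ) (h : 𝓢(E3, ℝ)) :
    Integrable fun v : E3 => |h v| ^ (2 : ℝ) * jap v ^ (l * 2) := by
  have hT : (fun v : E3 => h v * jap v ^ (l * 2)).HasTemperateGrowth :=
    h.hasTemperateGrowth.mul (jap_rpow_temperate _)
  refine (integrable_temp_mul hT h).congr (.of_forall fun v => ?_)
  simp only [Real.rpow_two, sq_abs]; ring

lemma Lpl_nonneg (p l : ℝ) (h : E3 → ℝ) : 0 ≤ Lpl p l h :=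
  Real.rpow_nonneg (integral_nonneg fun v => by
    have := jap_pos v
    positivity) _

lemma Lpl_sq (l : ℝ) (h : E3 → ℝ) :
    Lpl 2 l h ^ 2 = ∫ v : E3, |h v| ^ (2 : ℝ) * jap v ^ (l * 2) := by
  have h0 : 0 ≤ ∫ v : E3, |h v| ^ (2 : ℝ) * jap v ^ (l * 2) := integral_nonneg fun v => by
    have := jap_pos v
    positivity
  rw [Lpl, ← Real.sqrt_eq_rpow, Real.sq_sqrt h0]

/-- Cauchy–Schwarz for the convolution with the Landau kernel. -/
lemma convA_abs_le {l : ℝ} (hl : 3 / 2 < l) (i j : Fin 3) (h : 𝓢(E3, ℝ)) (v : E3) :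
    |convA i j h v| ≤
      2 * Real.sqrt (∫ z : E3, (‖z‖ ^ 2)⁻¹ * jap (v - z) ^ (-(2 * l))) * Lpl 2 l h := by
  have hsq : ∀ z : E3, (‖z‖⁻¹ * jap (v - z) ^ (-l)) ^ (2 : ℝ) =
      (‖z‖ ^ 2)⁻¹ * jap (v - z) ^ (-(2 * l)) := by
    intro z
    rw [Real.rpow_two, mul_pow, inv_pow, ← Real.rpow_mul_natCast (jap_pos _).le]
    congr 2; push_cast; ring
  have hsq' : ∀ z : E3, (|h (v - z)| * jap (v - z) ^ l) ^ (2 : ℝ) =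
      |h (v - z)| ^ (2 : ℝ) * jap (v - z) ^ (l * 2) := by
    intro z
    rw [Real.mul_rpow (abs_nonneg _) (Real.rpow_nonneg (jap_pos _).le _),
      ← Real.rpow_mul (jap_pos _).le]
  have hm1 : AEStronglyMeasurable (fun z : E3 => ‖z‖⁻¹ * jap (v - z) ^ (-l)) volume := by
    have := continuous_jap_rpow (-l)
    exact (Measurable.mul (by fun_prop)
      (this.measurable.comp (by fun_prop))).aestronglyMeasurable
  have hm2 : AEStronglyMeasurable (fun z : E3 => |h (v - z)| * jap (v - z) ^ l) volume := by
    have h1 := continuous_jap_rpow l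
    have h2 := h.continuous
    exact (Continuous.mul (by fun_prop)
      (h1.comp (by fun_prop : Continuous fun z : E3 => v - z))).aestronglyMeasurable
  have hp1 : ∀ z : E3, 0 ≤ ‖z‖⁻¹ * jap (v - z) ^ (-l) := fun z => by
    have := jap_pos (v - z)
    positivity
  have hp2 : ∀ z : E3, 0 ≤ |h (v - z)| * jap (v - z) ^ l := fun z => by
    have := jap_pos (v - z)
    positivity
  have e2 : ENNReal.ofReal 2 = 2 := by norm_num
  have hM1 : MemLp (fun z : E3 => ‖z‖⁻¹ * jap (v - z) ^ (-l)) (ENNReal.ofReal 2) volume := by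
    rw [e2, memLp_two_iff_integrable_sq hm1]
    simp only [← Real.rpow_two, hsq]
    simpa using integrable_ker (p := 2 * l) (by linarith) v
  have hM2 : MemLp (fun z : E3 => |h (v - z)| * jap (v - z) ^ l) (ENNReal.ofReal 2) volume := by
    rw [e2, memLp_two_iff_integrable_sq hm2]
    simp only [← Real.rpow_two, hsq']
    simpa using (integrable_weighted l h).comp_sub_left v
  have hH := integral_mul_le_Lp_mul_Lq_of_nonneg (μ := volume) Real.HolderConjugate.two_two
    (.of_forall hp1) (.of_forall hp2) hM1 hM2
  simp only [hsq, hsq'] at hH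
  rw [integral_sub_left_eq_self (fun z : E3 => |h z| ^ (2 : ℝ) * jap z ^ (l * 2)) volume v,
    ← Real.sqrt_eq_rpow (∫ z : E3, (‖z‖ ^ 2)⁻¹ * jap (v - z) ^ (-(2 * l)))] at hH
  have hcancel : ∀ z : E3, ‖z‖⁻¹ * jap (v - z) ^ (-l) * (|h (v - z)| * jap (v - z) ^ l) =
      ‖z‖⁻¹ * |h (v - z)| := by
    intro z
    have : jap (v - z) ^ (-l) * jap (v - z) ^ l = 1 := by
      rw [← Real.rpow_add (jap_pos _)]; simp
    linear_combination ‖z‖⁻¹ * |h (v - z)| * this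
  simp only [hcancel] at hH
  calc |convA i j h v| ≤ ∫ z : E3, |aK z i j * h (v - z)| := abs_integral_le_integral_abs
    _ ≤ ∫ z : E3, 2 * ‖z‖⁻¹ * |h (v - z)| := by
        refine integral_mono (integrable_conv i j h v).abs (integrable_inv_norm_mul h v) fun z => ?_
        simp only [abs_mul]
        gcongr
        exact abs_aK_le z i j
    _ = 2 * ∫ z : E3, ‖z‖⁻¹ * |h (v - z)| := by
        rw [← integral_const_mul]; simp only [mul_assoc]
    _ ≤ _ := by
        rw [mul_assoc]
        exact mul_le_mul_of_nonneg_left hH (by norm_num)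

/-! ### Norm estimates -/

lemma exists_multiIdx (f : 𝓢(E3, ℝ)) (i j : Fin 3) :
    ∃ m ∈ multiIdx 2, ⇑(sD i (sD j f)) = pdM m f := by
  wlog hij : i ≤ j generalizing i j
  · obtain ⟨m, hm, h⟩ := this j i (le_of_not_ge hij)
    exact ⟨m, hm, by rw [sD_comm, h]⟩
  refine ⟨fun l => (if l = i then 1 else 0) + (if l = j then 1 else 0), ?_, ?_⟩
  · fin_cases i <;> fin_cases j <;> decide
  · simp only [sD_eq]
    fin_cases i <;> fin_cases j <;> first
      | rfl
      | (exfalso; revert hij; decide)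

lemma Lpl_deriv_le (f : 𝓢(E3, ℝ)) (l : ℝ) (i j : Fin 3) :
    Lpl 2 l (sD i (sD j f)) ^ 2 ≤ HSob 2 l f ^ 2 := by
  obtain ⟨m, hm, h⟩ := exists_multiIdx f i j
  have hnn : 0 ≤ HSobSq 2 l f := Finset.sum_nonneg fun _ _ => sq_nonneg _
  rw [HSob, Real.sq_sqrt hnn, h, HSobSq]
  exact Finset.single_le_sum (f := fun m => Lpl 2 l (pdM m f) ^ 2) (fun _ _ => sq_nonneg _) hm

/-- The convolution `a * g` gains one power of decay. -/
lemma convA_decay {k : ℝ} (hk : 5 / 2 < k) :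
    ∃ C, 0 ≤ C ∧ ∀ (g : 𝓢(E3, ℝ)) (i j : Fin 3) (v : E3),
      jap v * |convA i j g v| ≤ C * Lpl 2 k g := by
  obtain ⟨C, hC0, hC⟩ := ker_bound_decay (p := 2 * k) (by linarith)
  refine ⟨2 * Real.sqrt C, by positivity, fun g i j v => ?_⟩
  have h1 := convA_abs_le (l := k) (by linarith) i j g v
  have hj := jap_pos v
  have h2 : jap v * Real.sqrt (∫ z : E3, (‖z‖ ^ 2)⁻¹ * jap (v - z) ^ (-(2 * k))) ≤
      Real.sqrt C := by
    rw [← Real.sqrt_sq hj.le, ← Real.sqrt_mul (sq_nonneg _)]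
    exact Real.sqrt_le_sqrt (hC v)
  have hG := Lpl_nonneg 2 k g
  calc _ ≤ jap v * (2 * Real.sqrt (∫ z : E3, (‖z‖ ^ 2)⁻¹ * jap (v - z) ^ (-(2 * k))) *
        Lpl 2 k g) := by gcongr
    _ = 2 * (jap v * Real.sqrt (∫ z : E3, (‖z‖ ^ 2)⁻¹ * jap (v - z) ^ (-(2 * k)))) *
        Lpl 2 k g := by ring
    _ ≤ _ := by gcongr

/-- A weighted Sobolev embedding: the fundamental-solution formula `convA_identity` bounds `f`
pointwise by its second derivatives. -/
lemma sup_bound {l : ℝ} (hl : 3 / 2 < l) :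
    ∃ C, 0 ≤ C ∧ ∀ (f : 𝓢(E3, ℝ)) (v : E3), massK * |f v| ≤ C * HSob 2 l f := by
  obtain ⟨C, hC0, hC⟩ := ker_bound (p := 2 * l) (by linarith)
  refine ⟨9 * (2 * Real.sqrt C), by positivity, fun f v => ?_⟩
  have hH : 0 ≤ HSob 2 l f := Real.sqrt_nonneg _
  have hb : ∀ i j, |convA i j (sD i (sD j f)) v| ≤ 2 * Real.sqrt C * HSob 2 l f := by
    intro i j
    refine (convA_abs_le hl i j _ v).trans ?_
    gcongr
    · exact Lpl_nonneg _ _ _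
    · exact hC v
    · exact abs_le_of_sq_le_sq' (Lpl_deriv_le f l i j) hH |>.2
  have h1 : massK * |f v| = |∑ i, ∑ j, convA i j (sD i (sD j f)) v| := by
    rw [convA_identity, abs_mul, abs_neg, abs_of_pos massK_pos]
  rw [h1]
  calc _ ≤ ∑ i, ∑ j, |convA i j (sD i (sD j f)) v| :=
        (Finset.abs_sum_le_sum_abs _ _).trans
          (Finset.sum_le_sum fun i _ => Finset.abs_sum_le_sum_abs _ _)
    _ ≤ ∑ _i : Fin 3, ∑ _j : Fin 3, 2 * Real.sqrt C * HSob 2 l f :=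
        Finset.sum_le_sum fun i _ => Finset.sum_le_sum fun j _ => hb i j
    _ = _ := by simp; ring

/-- for `k > 7/2` there is `C = C(k)` such that for all Schwartz `f, g`:
`‖Q(g,f)‖_{L²_k} ≤ C ‖g‖_{L²_k} ‖f‖_{H²_{k−1}}`. -/
theorem landau_L2_bound (k : ℝ) (hk : 7 / 2 < k) :
    ∃ C > 0, ∀ f g : SchwartzMap E3 ℝ,
      Lpl 2 k (landauQ (⇑g) (⇑f)) ≤ C * Lpl 2 k (⇑g) * HSob 2 (k - 1) (⇑f) := by
  obtain ⟨a, ha0, ha⟩ := convA_decay (k := k) (by linarith)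
  obtain ⟨b, hb0, hb⟩ := sup_bound (l := k - 1) (by linarith)
  refine ⟨Real.sqrt (162 * a ^ 2 + 2 * b ^ 2) + 1, by positivity, fun f g => ?_⟩
  set G := Lpl 2 k g
  set H := HSob 2 (k - 1) f
  have hG : 0 ≤ G := Lpl_nonneg _ _ _
  have hH : 0 ≤ H := Real.sqrt_nonneg _
  have hpt : ∀ v, |landauQ g f v| ^ (2 : ℝ) * jap v ^ (k * 2) ≤
      18 * (a * G) ^ 2 * (∑ p : Fin 3 × Fin 3,
        |sD p.1 (sD p.2 f) v| ^ (2 : ℝ) * jap v ^ ((k - 1) * 2)) +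
      2 * (b * H) ^ 2 * (|g v| ^ (2 : ℝ) * jap v ^ (k * 2)) := by
    intro v
    have hj := jap_pos v
    have e : ∀ (x r : ℝ), |x| ^ (2 : ℝ) * jap v ^ (r * 2) = (|x| * jap v ^ r) ^ 2 := by
      intro x r
      rw [Real.rpow_two, mul_pow, ← Real.rpow_mul_natCast hj.le]; norm_cast
    simp only [e]
    have hw : jap v ^ k = jap v * jap v ^ (k - 1) := by
      rw [← Real.rpow_one_add' hj.le (by linarith)]; congr 1; ring
    have hw0 : 0 < jap v ^ (k - 1) := Real.rpow_pos_of_pos hj _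
    have hwk : 0 < jap v ^ k := Real.rpow_pos_of_pos hj _
    have hQ : |landauQ g f v| * jap v ^ k ≤
        a * G * (∑ p : Fin 3 × Fin 3, |sD p.1 (sD p.2 f) v| * jap v ^ (k - 1)) +
          b * H * (|g v| * jap v ^ k) := by
      rw [landauQ_eq, convA_identity, ← Fintype.sum_prod_type']
      have t1 : |∑ p : Fin 3 × Fin 3, convA p.1 p.2 g v * sD p.1 (sD p.2 f) v| * jap v ^ k ≤
          a * G * (∑ p : Fin 3 × Fin 3, |sD p.1 (sD p.2 f) v| * jap v ^ (k - 1)) := by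
        rw [Finset.mul_sum]
        calc _ ≤ (∑ p : Fin 3 × Fin 3, |convA p.1 p.2 g v * sD p.1 (sD p.2 f) v|) * jap v ^ k := by
              gcongr; exact Finset.abs_sum_le_sum_abs _ _
          _ = ∑ p : Fin 3 × Fin 3, (jap v * |convA p.1 p.2 g v|) *
              (|sD p.1 (sD p.2 f) v| * jap v ^ (k - 1)) := by
              rw [Finset.sum_mul, hw]
              refine Finset.sum_congr rfl fun p _ => ?_
              rw [abs_mul]; ring
          _ ≤ _ := by
              refine Finset.sum_le_sum fun p _ => ?_
              exact mul_le_mul_of_nonneg_right (ha g p.1 p.2 v) (by positivity)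
      have t2 : |-massK * g v * f v| * jap v ^ k ≤ b * H * (|g v| * jap v ^ k) := by
        rw [abs_mul, abs_mul, abs_neg, abs_of_pos massK_pos]
        calc _ = (massK * |f v|) * (|g v| * jap v ^ k) := by ring
          _ ≤ _ := mul_le_mul_of_nonneg_right (hb f v) (by positivity)
      calc _ ≤ (|∑ p : Fin 3 × Fin 3, convA p.1 p.2 g v * sD p.1 (sD p.2 f) v| +
            |-massK * g v * f v|) * jap v ^ k := by
            gcongr; exact abs_sub _ _
        _ ≤ _ := by rw [add_mul]; exact add_le_add t1 t2
    set S := ∑ p : Fin 3 × Fin 3, |sD p.1 (sD p.2 f) v| * jap v ^ (k - 1)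
    have hS : S ^ 2 ≤ 9 * ∑ p : Fin 3 × Fin 3, (|sD p.1 (sD p.2 f) v| * jap v ^ (k - 1)) ^ 2 := by
      have := sq_sum_le_card_mul_sum_sq (s := (Finset.univ : Finset (Fin 3 × Fin 3)))
        (f := fun p => |sD p.1 (sD p.2 f) v| * jap v ^ (k - 1))
      simpa using this
    set y := |g v| * jap v ^ k
    calc (|landauQ g f v| * jap v ^ k) ^ 2 ≤ (a * G * S + b * H * y) ^ 2 := by gcongr
      _ ≤ 2 * (a * G) ^ 2 * S ^ 2 + 2 * (b * H) ^ 2 * y ^ 2 := by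
          nlinarith [sq_nonneg (a * G * S - b * H * y)]
      _ ≤ _ := by nlinarith [mul_le_mul_of_nonneg_left hS (sq_nonneg (a * G))]
  have hI1 : Integrable fun v => ∑ p : Fin 3 × Fin 3,
      |sD p.1 (sD p.2 f) v| ^ (2 : ℝ) * jap v ^ ((k - 1) * 2) :=
    integrable_finsetSum _ fun p _ => integrable_weighted (k - 1) (sD p.1 (sD p.2 f))
  have hI2 := integrable_weighted k g
  have hmain : Lpl 2 k (landauQ g f) ^ 2 ≤ (162 * a ^ 2 + 2 * b ^ 2) * (G * H) ^ 2 := by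
    rw [Lpl_sq]
    calc _ ≤ ∫ v, (18 * (a * G) ^ 2 * (∑ p : Fin 3 × Fin 3,
            |sD p.1 (sD p.2 f) v| ^ (2 : ℝ) * jap v ^ ((k - 1) * 2)) +
          2 * (b * H) ^ 2 * (|g v| ^ (2 : ℝ) * jap v ^ (k * 2))) := by
          refine integral_mono_of_nonneg (.of_forall fun v => ?_)
            ((hI1.const_mul _).add (hI2.const_mul _)) (.of_forall hpt)
          have := jap_pos v
          simp only [Pi.zero_apply]
          positivity
      _ = 18 * (a * G) ^ 2 * (∑ p : Fin 3 × Fin 3, Lpl 2 (k - 1) (sD p.1 (sD p.2 f)) ^ 2) +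
          2 * (b * H) ^ 2 * G ^ 2 := by
          rw [integral_add (hI1.const_mul _) (hI2.const_mul _), integral_const_mul,
            integral_const_mul, integral_finsetSum _ fun p _ => integrable_weighted (k - 1) _]
          simp only [Lpl_sq, G]
      _ ≤ 18 * (a * G) ^ 2 * (∑ _p : Fin 3 × Fin 3, H ^ 2) + 2 * (b * H) ^ 2 * G ^ 2 := by
          have := Finset.sum_le_sum (s := Finset.univ) fun (p : Fin 3 × Fin 3) _ =>
            Lpl_deriv_le f (k - 1) p.1 p.2
          exact add_le_add (mul_le_mul_of_nonneg_left this (by positivity)) le_rfl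
      _ = _ := by simp; ring
  set c := 162 * a ^ 2 + 2 * b ^ 2
  have hc : 0 ≤ c := by positivity
  have h1 : Lpl 2 k (landauQ g f) ≤ Real.sqrt c * (G * H) := by
    refine abs_le_of_sq_le_sq' ?_ (by positivity) |>.2
    rw [mul_pow, Real.sq_sqrt hc]
    exact hmain
  nlinarith [mul_nonneg hG hH]
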